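/- For every index i ∈ {1,…,ℓ}, all u, v ∈ ℂ with u ≠ v, and every function f, at every point γ (in the Cartan/difference-operator setting described in the context) at which all denominators occurring are nonzero: ((E_i(u)E_i(v) − E_i(v)E_i(u))f)(γ) = −(h/2)(α_i,α_i)·(u−v)^{−1} · (((E_i(u) − E_i(v)) ∘ (E_i(u) − E_i(v)))f)(γ), i.e. [E_i(u),E_i(v)] = −(h/2)(α_i,α_i)·(E_i(u)−E_i(v))²/(u−v). -/

import Mathlib

/-!
Write `x_k = γ_{i,k}` and `η = h d_i`, so that `(h/2)(α_i,α_i) = η`. Composing two of the operators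
gives `E_i(u) E_i(v) f (γ) = ∑_{k,j} C_{kj} / ((u − x_k)(v − x_j + η δ_{jk}))`, where the
value `C_{kj} = (κ_{i,k} κ_{i,j} f)(γ)` does not involve the spectral parameters (`Eop_Eop`).
The claimed relation is therefore `∑_{k,j} C_{kj} g_{kj} = 0` for an explicit rational function `g`. A partial fraction computation gives `g_{kk} = 0` and, for `k ≠ j`,
`g_{kj} = (u − v)(x_j − x_k + η) / Π_{kj}` with `Π_{kj}` symmetric in `k, j`. The exchange relation
`C_{kj} (x_j − x_k + η) = C_{jk} (x_j − x_k − η)` (`coef_exchange`) then cancels the `(k, j)` term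
against the `(j, k)` term.
-/

open Finset

noncomputable section

variable {ℓ : ℕ}

/-- The pairing `(α_i, α_j) = d_i a_{ij}`, as a complex number. -/
def pr (a : Fin ℓ → Fin ℓ → ℤ) (d : Fin ℓ → ℕ) (i j : Fin ℓ) : ℂ :=
  (d i : ℂ) * (a i j : ℂ)

/-- Points: tuples `γ = (γ_{i,k})`, `i ∈ {1,…,ℓ}`, `1 ≤ k ≤ m_i`, of complex numbers. -/
abbrev Pt {ℓ : ℕ} (m : Fin ℓ → ℕ) : Type := ((i : Fin ℓ) × Fin (m i)) → ℂ

variable {m : Fin ℓ → ℕ}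

/-- `P_s(u; γ) = ∏_{p=1}^{m_s} (u − γ_{s,p})`. -/
def Pp (γ : Pt m) (s : Fin ℓ) (u : ℂ) : ℂ :=
  ∏ p : Fin (m s), (u - γ ⟨s, p⟩)

/-- The shifted point `γ + c·e_{i,k}`. -/
def sh (γ : Pt m) (i : Fin ℓ) (k : Fin (m i)) (c : ℂ) : Pt m :=
  fun x => if x = ⟨i, k⟩ then γ x + c else γ x

/-- The denominator `∏_{p ≠ k} (γ_{i,k} − γ_{i,p})` (an empty product equals 1). -/
def Dk (γ : Pt m) (i : Fin ℓ) (k : Fin (m i)) : ℂ :=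
  ∏ p ∈ Finset.univ.erase k, (γ ⟨i, k⟩ - γ ⟨i, p⟩)

/-- The difference operator `κ_{i,k}`:
`(κ_{i,k} f)(γ) = (√d_i)⁻¹ · [∏_{s>i} ∏_{r=1}^{−a_{si}} P_s(γ_{i,k} − (h/2)(α_i+rα_s,α_s); γ)]
  · [∏_{p≠k}(γ_{i,k} − γ_{i,p})]⁻¹ · f(γ − h d_i e_{i,k})`. -/
def kap (a : Fin ℓ → Fin ℓ → ℤ) (d : Fin ℓ → ℕ) (h : ℂ)
    (i : Fin ℓ) (k : Fin (m i)) (f : Pt m → ℂ) (γ : Pt m) : ℂ :=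
  ((Real.sqrt (d i) : ℝ) : ℂ)⁻¹ *
    (∏ s ∈ Finset.univ.filter (fun s => i < s), ∏ r ∈ Finset.range (-(a s i)).toNat,
      Pp γ s (γ ⟨i, k⟩ - h / 2 * (pr a d i s + ((r : ℂ) + 1) * pr a d s s))) *
    (Dk γ i k)⁻¹ * f (sh γ i k (-(h * (d i : ℂ))))

/-- The difference operator `κ′_{i,k}` (depending on the functions `R_i`):
`(κ′_{i,k} f)(γ) = −(√d_i)⁻¹ · R_i(γ_{i,k} + h d_i)
  · [∏_{s<i} ∏_{r=1}^{−a_{si}} P_s(γ_{i,k} − (h/2)(α_i+rα_s,α_s) + h d_i; γ)]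
  · [∏_{p≠k}(γ_{i,k} − γ_{i,p})]⁻¹ · f(γ + h d_i e_{i,k})`. -/
def kap' (a : Fin ℓ → Fin ℓ → ℤ) (d : Fin ℓ → ℕ) (h : ℂ) (R : Fin ℓ → ℂ → ℂ)
    (i : Fin ℓ) (k : Fin (m i)) (f : Pt m → ℂ) (γ : Pt m) : ℂ :=
  -((Real.sqrt (d i) : ℝ) : ℂ)⁻¹ * R i (γ ⟨i, k⟩ + h * (d i : ℂ)) *
    (∏ s ∈ Finset.univ.filter (fun s => s < i), ∏ r ∈ Finset.range (-(a s i)).toNat,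
      Pp γ s (γ ⟨i, k⟩ - h / 2 * (pr a d i s + ((r : ℂ) + 1) * pr a d s s) + h * (d i : ℂ))) *
    (Dk γ i k)⁻¹ * f (sh γ i k (h * (d i : ℂ)))

/-- The multiplication operator `H_i(u)`. -/
def Hop (a : Fin ℓ → Fin ℓ → ℤ) (d : Fin ℓ → ℕ) (h : ℂ) (R : Fin ℓ → ℂ → ℂ)
    (u : ℂ) (i : Fin ℓ) (f : Pt m → ℂ) (γ : Pt m) : ℂ :=
  R i u *
    (∏ s ∈ Finset.univ.filter (fun s => s ≠ i), ∏ r ∈ Finset.range (-(a s i)).toNat,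
      Pp γ s (u - h / 2 * (pr a d i s + ((r : ℂ) + 1) * pr a d s s))) *
    (Pp γ i u * Pp γ i (u - h * (d i : ℂ)))⁻¹ * f γ

/-- The operator `E_i(u) = Σ_{k=1}^{m_i} (u − γ_{i,k})⁻¹ κ_{i,k}`. -/
def Eop (a : Fin ℓ → Fin ℓ → ℤ) (d : Fin ℓ → ℕ) (h : ℂ)
    (u : ℂ) (i : Fin ℓ) (f : Pt m → ℂ) (γ : Pt m) : ℂ :=
  ∑ k : Fin (m i), (u - γ ⟨i, k⟩)⁻¹ * kap a d h i k f γ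

/-- The operator `F_i(u) = Σ_{k=1}^{m_i} κ′_{i,k} (u − γ_{i,k} − h d_i)⁻¹`. -/
def Fop (a : Fin ℓ → Fin ℓ → ℤ) (d : Fin ℓ → ℕ) (h : ℂ) (R : Fin ℓ → ℂ → ℂ)
    (u : ℂ) (i : Fin ℓ) (f : Pt m → ℂ) (γ : Pt m) : ℂ :=
  ∑ k : Fin (m i), (u - γ ⟨i, k⟩ - h * (d i : ℂ))⁻¹ * kap' a d h R i k f γ

/-- The zero mode `E_i^{(0)} = Σ_{k=1}^{m_i} κ_{i,k}`. -/
def E0 (a : Fin ℓ → Fin ℓ → ℤ) (d : Fin ℓ → ℕ) (h : ℂ)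
    (i : Fin ℓ) (f : Pt m → ℂ) (γ : Pt m) : ℂ :=
  ∑ k : Fin (m i), kap a d h i k f γ

/-- The numerator of `κ_{i,k}`: its coefficient without the factor `(Dk γ i k)⁻¹`. -/
def kapNum (a : Fin ℓ → Fin ℓ → ℤ) (d : Fin ℓ → ℕ) (h : ℂ)
    (i : Fin ℓ) (k : Fin (m i)) (γ : Pt m) : ℂ :=
  ((Real.sqrt (d i) : ℝ) : ℂ)⁻¹ *
    (∏ s ∈ Finset.univ.filter (fun s => i < s), ∏ r ∈ Finset.range (-(a s i)).toNat,
      Pp γ s (γ ⟨i, k⟩ - h / 2 * (pr a d i s + ((r : ℂ) + 1) * pr a d s s)))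

/-- The value `(κ_{i,k} κ_{i,j} f)(γ)`. -/
def coef (a : Fin ℓ → Fin ℓ → ℤ) (d : Fin ℓ → ℕ) (h : ℂ)
    (i : Fin ℓ) (f : Pt m → ℂ) (γ : Pt m) (k j : Fin (m i)) : ℂ :=
  kap a d h i k (kap a d h i j f) γ

theorem sh_self (γ : Pt m) (i : Fin ℓ) (k : Fin (m i)) (c : ℂ) :
    sh γ i k c ⟨i, k⟩ = γ ⟨i, k⟩ + c := by simp [sh]

theorem sh_ne (γ : Pt m) (i : Fin ℓ) {k j : Fin (m i)} (hjk : j ≠ k) (c : ℂ) :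
    sh γ i k c ⟨i, j⟩ = γ ⟨i, j⟩ := by simp [sh, hjk]

theorem sh_comm (γ : Pt m) (i : Fin ℓ) (k j : Fin (m i)) (c : ℂ) :
    sh (sh γ i k c) i j c = sh (sh γ i j c) i k c := by
  funext x
  simp only [sh]
  split_ifs <;> rfl

theorem Pp_sh (γ : Pt m) {i s : Fin ℓ} (his : s ≠ i) (k : Fin (m i)) (c w : ℂ) :
    Pp (sh γ i k c) s w = Pp γ s w := by
  simp [Pp, sh, his]

/-- The numerator of `κ_{i,j}` involves only `γ_{i,j}` and coordinates `γ_{s,p}` with `s > i`. -/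
theorem kapNum_sh (a : Fin ℓ → Fin ℓ → ℤ) (d : Fin ℓ → ℕ) (h : ℂ)
    (i : Fin ℓ) {k j : Fin (m i)} (hjk : j ≠ k) (γ : Pt m) (c : ℂ) :
    kapNum a d h i j (sh γ i k c) = kapNum a d h i j γ := by
  unfold kapNum
  congr 1
  refine Finset.prod_congr rfl fun s hs => Finset.prod_congr rfl fun r _ => ?_
  rw [Pp_sh γ (ne_of_gt (Finset.mem_filter.1 hs).2), sh_ne γ i hjk]

/-- The part of `Dk γ i k` left after removing the factor `γ_{i,k} − γ_{i,j}`. -/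
def Dk2 (γ : Pt m) (i : Fin ℓ) (k j : Fin (m i)) : ℂ :=
  ∏ p ∈ (Finset.univ.erase k).erase j, (γ ⟨i, k⟩ - γ ⟨i, p⟩)

theorem Dk_eq (γ : Pt m) (i : Fin ℓ) {k j : Fin (m i)} (hjk : j ≠ k) :
    Dk γ i k = (γ ⟨i, k⟩ - γ ⟨i, j⟩) * Dk2 γ i k j :=
  (Finset.mul_prod_erase _ _ (Finset.mem_erase.2 ⟨hjk, Finset.mem_univ j⟩)).symm

theorem Dk2_sh (γ : Pt m) (i : Fin ℓ) {k j : Fin (m i)} (hjk : j ≠ k) (c : ℂ) :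
    Dk2 (sh γ i k c) i j k = Dk2 γ i j k := by
  unfold Dk2
  refine Finset.prod_congr rfl fun p hp => ?_
  rw [sh_ne γ i hjk, sh_ne γ i (Finset.mem_erase.1 hp).1]

theorem Dk_sh (γ : Pt m) (i : Fin ℓ) {k j : Fin (m i)} (hjk : j ≠ k) (c : ℂ) :
    Dk (sh γ i k c) i j = (γ ⟨i, j⟩ - γ ⟨i, k⟩ - c) * Dk2 γ i j k := by
  rw [Dk_eq _ i hjk.symm, Dk2_sh γ i hjk, sh_ne γ i hjk, sh_self]
  ring

theorem kap_eq (a : Fin ℓ → Fin ℓ → ℤ) (d : Fin ℓ → ℕ) (h : ℂ)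
    (i : Fin ℓ) (k : Fin (m i)) (f : Pt m → ℂ) (γ : Pt m) :
    kap a d h i k f γ
      = kapNum a d h i k γ * (Dk γ i k)⁻¹ * f (sh γ i k (-(h * (d i : ℂ)))) := rfl

/-- Exchanging `κ_{i,k}` and `κ_{i,j}` only changes the one denominator factor of the inner
operator that is affected by the shift of the outer one. -/
theorem coef_exchange (a : Fin ℓ → Fin ℓ → ℤ) (d : Fin ℓ → ℕ) (h : ℂ)
    (i : Fin ℓ) (f : Pt m → ℂ) (γ : Pt m)
    (hD : ∀ k : Fin (m i), Dk γ i k ≠ 0)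
    (hDs : ∀ (k k' : Fin (m i)), Dk (sh γ i k (-(h * (d i : ℂ)))) i k' ≠ 0)
    {k j : Fin (m i)} (hjk : j ≠ k) :
    coef a d h i f γ k j * (γ ⟨i, j⟩ - γ ⟨i, k⟩ + h * (d i : ℂ))
      = coef a d h i f γ j k * (γ ⟨i, j⟩ - γ ⟨i, k⟩ - h * (d i : ℂ)) := by
  have h1 := hD k
  have h2 := hD j
  have h3 := hDs k j
  have h4 := hDs j k
  unfold coef
  simp only [kap_eq]
  rw [kapNum_sh a d h i hjk, kapNum_sh a d h i hjk.symm, sh_comm γ i j k]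
  rw [Dk_sh γ i hjk] at h3 ⊢
  rw [Dk_sh γ i hjk.symm] at h4 ⊢
  rw [Dk_eq γ i hjk] at h1 ⊢
  rw [Dk_eq γ i hjk.symm] at h2 ⊢
  generalize f _ = F
  generalize kapNum a d h i k γ = A
  generalize kapNum a d h i j γ = B
  generalize Dk2 γ i k j = Q at *
  generalize Dk2 γ i j k = R at *
  generalize γ ⟨i, k⟩ = x at *
  generalize γ ⟨i, j⟩ = y at *
  generalize h * (d i : ℂ) = η at *
  obtain ⟨h1, hQ⟩ := mul_ne_zero_iff.1 h1
  obtain ⟨h2, hR⟩ := mul_ne_zero_iff.1 h2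
  have h3 := (mul_ne_zero_iff.1 h3).1
  have h4 := (mul_ne_zero_iff.1 h4).1
  have e1 : x - y = -(y - x) := by ring
  have e2 : y - x - -η = y - x + η := by ring
  have e3 : -(y - x) - -η = -(y - x - η) := by ring
  rw [e1] at h4 ⊢
  rw [e2] at h3 ⊢
  rw [e3] at h4 ⊢
  have h4 := neg_ne_zero.1 h4
  generalize y - x = t at *
  field_simp

theorem Eop_Eop (a : Fin ℓ → Fin ℓ → ℤ) (d : Fin ℓ → ℕ) (h : ℂ)
    (u v : ℂ) (i : Fin ℓ) (f : Pt m → ℂ) (γ : Pt m) :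
    Eop a d h u i (Eop a d h v i f) γ
      = ∑ k : Fin (m i), ∑ j : Fin (m i), (u - γ ⟨i, k⟩)⁻¹ *
          (v - sh γ i k (-(h * (d i : ℂ))) ⟨i, j⟩)⁻¹ * coef a d h i f γ k j := by
  unfold Eop coef
  refine Finset.sum_congr rfl fun k _ => ?_
  rw [kap_eq, Finset.mul_sum, Finset.mul_sum]
  refine Finset.sum_congr rfl fun j _ => ?_
  rw [kap_eq _ _ _ _ k]
  ring

theorem Eop_sub (a : Fin ℓ → Fin ℓ → ℤ) (d : Fin ℓ → ℕ) (h : ℂ)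
    (u : ℂ) (i : Fin ℓ) (f g : Pt m → ℂ) (γ : Pt m) :
    Eop a d h u i (fun γ' => f γ' - g γ') γ = Eop a d h u i f γ - Eop a d h u i g γ := by
  unfold Eop
  rw [← Finset.sum_sub_distrib]
  refine Finset.sum_congr rfl fun k _ => ?_
  simp only [kap_eq]
  ring

/-- A double sum vanishes when each term cancels against its transpose. -/
theorem sum_sum_eq_zero_of_antisymm {n : ℕ} (T : Fin n → Fin n → ℂ)
    (hT : ∀ k j, T k j + T j k = 0) : ∑ k, ∑ j, T k j = 0 := by
  have h1 : ∑ k, ∑ j, T k j + ∑ k, ∑ j, T j k = 0 := by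
    simp [← Finset.sum_add_distrib, hT]
  rw [Finset.sum_comm (f := fun k j => T j k)] at h1
  exact add_self_eq_zero.1 h1

/-- The relation `[E_i(u), E_i(v)] = −(h/2)(α_i,α_i)·(u−v)⁻¹·(E_i(u)−E_i(v))²`
for the explicit difference operators. -/
theorem E_E_same_index_commutation
    (hℓ : 1 ≤ ℓ) (a : Fin ℓ → Fin ℓ → ℤ) (d : Fin ℓ → ℕ)
    (hdiag : ∀ i, a i i = 2) (hoff : ∀ i j, i ≠ j → a i j ≤ 0)
    (hdpos : ∀ i, 0 < d i) (hsymm : ∀ i j, (d i : ℤ) * a i j = (d j : ℤ) * a j i)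
    (h : ℂ) (i : Fin ℓ) (u v : ℂ) (huv : u ≠ v)
    (f : Pt m → ℂ) (γ : Pt m)
    (hD : ∀ k : Fin (m i), Dk γ i k ≠ 0)
    (hDs : ∀ (k k' : Fin (m i)), Dk (sh γ i k (-(h * (d i : ℂ)))) i k' ≠ 0)
    (hu : ∀ k : Fin (m i), u - γ ⟨i, k⟩ ≠ 0)
    (hus : ∀ (k k' : Fin (m i)), u - (sh γ i k (-(h * (d i : ℂ)))) ⟨i, k'⟩ ≠ 0)
    (hv : ∀ k : Fin (m i), v - γ ⟨i, k⟩ ≠ 0)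
    (hvs : ∀ (k k' : Fin (m i)), v - (sh γ i k (-(h * (d i : ℂ)))) ⟨i, k'⟩ ≠ 0) :
    Eop a d h u i (Eop a d h v i f) γ - Eop a d h v i (Eop a d h u i f) γ
      = -(h / 2 * pr a d i i) * (u - v)⁻¹ *
          (Eop a d h u i (fun γ' => Eop a d h u i f γ' - Eop a d h v i f γ') γ
            - Eop a d h v i (fun γ' => Eop a d h u i f γ' - Eop a d h v i f γ') γ) := by
  have hp : h / 2 * pr a d i i = h * (d i : ℂ) := by
    simp only [pr, hdiag]; push_cast; ring
  have huv' : u - v ≠ 0 := sub_ne_zero.2 huv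
  rw [Eop_sub, Eop_sub, hp]
  simp only [Eop_Eop]
  rw [← sub_eq_zero]
  simp only [← Finset.sum_sub_distrib, Finset.mul_sum]
  refine sum_sum_eq_zero_of_antisymm _ fun k j => ?_
  by_cases hjk : j = k
  · subst hjk
    have h1 := hu j
    have h2 := hv j
    have h3 := hus j j
    have h4 := hvs j j
    rw [sh_self] at *
    field_simp
    ring
  · have hc := coef_exchange a d h i f γ hD hDs hjk
    have hkj : k ≠ j := fun e => hjk e.symm
    rw [sh_ne γ i hjk, sh_ne γ i hkj]
    have h1 := hu j
    have h2 := hv j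
    have h3 := hu k
    have h4 := hv k
    generalize coef a d h i f γ k j = C at *
    generalize coef a d h i f γ j k = C' at *
    generalize γ ⟨i, k⟩ = x at *
    generalize γ ⟨i, j⟩ = y at *
    generalize h * (d i : ℂ) = η at *
    -- The sum of the two transposed terms is a multiple of the exchange relation.
    have key : (u - v) * ((u - x)⁻¹ * (v - x)⁻¹ * (u - y)⁻¹ * (v - y)⁻¹) *
        (C * (y - x + η) - C' * (y - x - η)) = 0 := by
      rw [hc]; ring
    rw [← key]
    field_simp
    ring

end
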